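/- Let Ξ be a nonempty compact subset of ℝ^d, let Q : Ξ → ℝ be bounded and upper semicontinuous, let 𝒵 be a nonempty finite set, let ψ_1, …, ψ_m : Ξ × 𝒵 → ℝ with ψ_i(·, z) continuous on Ξ for every z ∈ 𝒵, and let γ_1, …, γ_m : 𝒵 → ℝ. Suppose the mixed-integer ambiguity set 𝒫^I = { (P, z) : z ∈ 𝒵, P a Borel probability measure on Ξ with ∫_Ξ ψ_i(ξ, z) dP(ξ) ≤ γ_i(z) for all i } is nonempty. Then sup_{(P,z) ∈ 𝒫^I} ∫_Ξ Q dP is attained, and it equals the maximum of ∑_{j=1}^{m+1} p_j Q(ξ_j) over all z ∈ 𝒵, ξ_1, …, ξ_{m+1} ∈ Ξ and p_1, …, p_{m+1} ≥ 0 with ∑_j p_j = 1 and ∑_j p_j ψ_i(ξ_j, z) ≤ γ_i(z) for every i ∈ {1,…,m}. -/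

import Mathlib

open MeasureTheory

/-!
Fix a selection `z`, and consider the convex hull of the points `(Ψ z x, t)` with `x ∈ Ξ` and
`c ≤ t ≤ Q x`, where `c` is a lower bound of `Q`. Passing from the graph of `Q` to its hypograph
makes this body compact although `Q` is only upper semicontinuous, and it contains the pair
`(∫ Ψ z, ∫ Q)` of every probability measure on `Ξ`. Hence the height `t` attains a maximum over the
points of the body whose moments are admissible. A highest point is not interior to the body, so it
is a convex combination of `dim (E × ℝ) = dim E + 1` generators, one fewer than Carathéodory's
theorem gives; their base points are the atoms of an optimal measure. Finally one maximizes over the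
finitely many `z`.
-/

section ConvexHull

open Module

lemma exists_fin_sum_smul_eq {V ι : Type*} [AddCommMonoid V] [Module ℝ V] [Fintype ι]
    (x : ι → V) {w : ι → ℝ} (hw : w ∈ stdSimplex ℝ ι) {n : ℕ} (hn : Fintype.card ι ≤ n) :
    ∃ (e : Fin n → ι) (p : Fin n → ℝ), p ∈ stdSimplex ℝ (Fin n) ∧
      ∑ j, p j • x (e j) = ∑ i, w i • x i := by
  obtain ⟨f⟩ : Nonempty (ι ↪ Fin n) :=
    Function.Embedding.nonempty_of_card_le (by rwa [Fintype.card_fin])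
  have : Nonempty ι := by
    by_contra h
    rw [not_nonempty_iff] at h
    simpa using hw.2
  let p : Fin n → ℝ := Function.extend f w 0
  have hf : ∀ i, p (f i) = w i := f.injective.extend_apply w 0
  have hf0 : ∀ j ∉ Set.range f, p j = 0 := Function.extend_apply' w (0 : Fin n → ℝ)
  refine ⟨Function.invFun f, p, ⟨fun j => ?_, ?_⟩, ?_⟩
  · by_cases hj : j ∈ Set.range f
    · obtain ⟨i, rfl⟩ := hj
      exact (hw.1 i).trans_eq (hf i).symm
    · exact (hf0 j hj).ge
  · rw [← hw.2]
    exact (Fintype.sum_of_injective f f.injective _ _ hf0 fun i => (hf i).symm).symm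
  · refine (Fintype.sum_of_injective f f.injective _ _ (fun j hj => ?_) fun i => ?_).symm
    · rw [hf0 j hj, zero_smul]
    · rw [hf i, Function.leftInverse_invFun f.injective i]

variable {V : Type*} [NormedAddCommGroup V] [NormedSpace ℝ V] [FiniteDimensional ℝ V]
  {S : Set V} {x : V} {n : ℕ}

lemma exists_fin_of_mem_convexHull (hn : finrank ℝ V < n) (hx : x ∈ convexHull ℝ S) :
    ∃ (y : Fin n → V) (p : Fin n → ℝ), (∀ j, y j ∈ S) ∧ p ∈ stdSimplex ℝ (Fin n) ∧
      ∑ j, p j • y j = x := by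
  obtain ⟨ι, _, y, w, hy, hind, hw0, hw1, rfl⟩ := eq_pos_convex_span_of_mem_convexHull hx
  have hcard : Fintype.card ι ≤ n :=
    hind.card_le_finrank_succ.trans <| (Nat.succ_le_succ (Submodule.finrank_le _)).trans hn
  obtain ⟨e, p, hp, hsum⟩ := exists_fin_sum_smul_eq y ⟨fun i => (hw0 i).le, hw1⟩ hcard
  exact ⟨y ∘ e, p, fun j => hy ⟨e j, rfl⟩, hp, hsum⟩

lemma sum_smul_mem_interior_convexHull {ι : Type*} [Fintype ι] {y : ι → V}
    (hy : AffineIndependent ℝ y) (hcard : Fintype.card ι = finrank ℝ V + 1)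
    {w : ι → ℝ} (hw0 : ∀ i, 0 < w i) (hw1 : ∑ i, w i = 1) :
    ∑ i, w i • y i ∈ interior (convexHull ℝ (Set.range y)) := by
  let b : AffineBasis ι ℝ V :=
    ⟨y, hy, hy.affineSpan_eq_top_iff_card_eq_finrank_add_one.2 hcard⟩
  rw [← Finset.univ.affineCombination_eq_linear_combination y w hw1]
  refine (b.interior_convexHull).symm.subset fun i => ?_
  exact (hw0 i).trans_eq (b.coord_apply_combination_of_mem (Finset.mem_univ i) hw1).symm

lemma exists_fin_of_mem_convexHull_of_notMem_interior (hn : finrank ℝ V ≤ n)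
    (hx : x ∈ convexHull ℝ S) (hxi : x ∉ interior (convexHull ℝ S)) :
    ∃ (y : Fin n → V) (p : Fin n → ℝ), (∀ j, y j ∈ S) ∧ p ∈ stdSimplex ℝ (Fin n) ∧
      ∑ j, p j • y j = x := by
  obtain ⟨ι, _, y, w, hy, hind, hw0, hw1, rfl⟩ := eq_pos_convex_span_of_mem_convexHull hx
  have hle : Fintype.card ι ≤ finrank ℝ V + 1 :=
    hind.card_le_finrank_succ.trans (Nat.succ_le_succ (Submodule.finrank_le _))
  have hne : Fintype.card ι ≠ finrank ℝ V + 1 := fun hcard =>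
    hxi (interior_mono (convexHull_mono hy) (sum_smul_mem_interior_convexHull hind hcard hw0 hw1))
  obtain ⟨e, p, hp, hsum⟩ :=
    exists_fin_sum_smul_eq y ⟨fun i => (hw0 i).le, hw1⟩ (n := n) (by omega)
  exact ⟨y ∘ e, p, fun j => hy ⟨e j, rfl⟩, hp, hsum⟩

lemma isCompact_convexHull_of_isCompact (hS : IsCompact S) : IsCompact (convexHull ℝ S) := by
  let combination : (Fin (finrank ℝ V + 1) → V) × (Fin (finrank ℝ V + 1) → ℝ) → V :=
    fun q => ∑ j, q.2 j • q.1 j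
  have himage : convexHull ℝ S =
      combination '' ((Set.univ.pi fun _ => S) ×ˢ stdSimplex ℝ (Fin (finrank ℝ V + 1))) := by
    ext x
    constructor
    · intro hx
      obtain ⟨y, p, hy, hp, hsum⟩ := exists_fin_of_mem_convexHull (Nat.lt_succ_self _) hx
      exact ⟨(y, p), ⟨fun j _ => hy j, hp⟩, hsum⟩
    · rintro ⟨⟨y, p⟩, ⟨hy, hp⟩, rfl⟩
      exact mem_convexHull_of_exists_fintype p y hp.1 hp.2 (fun j => hy j trivial) rfl
  rw [himage]
  exact ((isCompact_univ_pi fun _ => hS).prod (isCompact_stdSimplex ℝ _)).image (by fun_prop)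

lemma exists_gt_mem_of_mem_interior {Y : Type*} [TopologicalSpace Y] {s : Set (Y × ℝ)} {y : Y}
    {t : ℝ} (h : (y, t) ∈ interior s) : ∃ t' > t, (y, t') ∈ s :=
  ((Continuous.prodMk_right y).continuousAt.eventually
    (mem_interior_iff_mem_nhds.1 h)).exists_gt

end ConvexHull

section DiscreteMeasure

variable {X ι : Type*} [MeasurableSpace X] [Fintype ι] {p : ι → ℝ} {ξ : ι → X}

/-- The finitely supported measure with mass `p j` at the atom `ξ j`; negative masses are read
as `0`. -/
noncomputable def discreteMeasure (p : ι → ℝ) (ξ : ι → X) : Measure X :=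
  ∑ j, ENNReal.ofReal (p j) • Measure.dirac (ξ j)

lemma isProbabilityMeasure_discreteMeasure (hp : p ∈ stdSimplex ℝ ι) :
    IsProbabilityMeasure (discreteMeasure p ξ) :=
  ⟨by simp [discreteMeasure, ← ENNReal.ofReal_sum_of_nonneg fun j _ => hp.1 j, hp.2]⟩

lemma discreteMeasure_compl_eq_zero {s : Set X} (hs : MeasurableSet s) (hξ : ∀ j, ξ j ∈ s) :
    discreteMeasure p ξ sᶜ = 0 := by
  simp [discreteMeasure, Measure.dirac_apply' _ hs.compl, hξ]

lemma integral_discreteMeasure [MeasurableSingletonClass X] {E : Type*} [NormedAddCommGroup E]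
    [NormedSpace ℝ E] [CompleteSpace E] (hp : ∀ j, 0 ≤ p j) (f : X → E) :
    ∫ x, f x ∂(discreteMeasure p ξ) = ∑ j, p j • f (ξ j) := by
  rw [discreteMeasure, integral_finsetSum_measure fun j _ =>
    (integrable_dirac (by finiteness)).smul_measure ENNReal.ofReal_ne_top]
  refine Finset.sum_congr rfl fun j _ => ?_
  rw [integral_smul_measure, integral_dirac, ENNReal.toReal_ofReal (hp j)]

end DiscreteMeasure

section Integrability

variable {X : Type*} [TopologicalSpace X] [T2Space X] [MeasurableSpace X] [OpensMeasurableSpace X]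
  {P : Measure X} [IsFiniteMeasure P] {Ξ : Set X}

lemma integrable_of_continuousOn_of_compl_null {E : Type*} [NormedAddCommGroup E] {Ψ : X → E}
    (hΞ : IsCompact Ξ) (hP : P Ξᶜ = 0) (hΨ : ContinuousOn Ψ Ξ) : Integrable Ψ P := by
  have h := hΨ.integrableOn_compact (μ := P) hΞ
  rwa [IntegrableOn, Measure.restrict_eq_self_of_ae_mem (mem_ae_iff.2 hP)] at h

lemma integrable_of_upperSemicontinuousOn_of_compl_null {Q : X → ℝ} (hΞ : IsCompact Ξ)
    (hP : P Ξᶜ = 0) (hQ : UpperSemicontinuousOn Q Ξ) (hQb : BddBelow (Q '' Ξ)) :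
    Integrable Q P := by
  have hae : ∀ᵐ x ∂P, x ∈ Ξ := mem_ae_iff.2 hP
  have hmeas : AEMeasurable Q P := by
    rw [← Measure.restrict_eq_self_of_ae_mem hae]
    exact aemeasurable_restrict_of_measurable_subtype hΞ.measurableSet
      (upperSemicontinuousOn_iff_restrict.2 hQ).measurable
  obtain ⟨c, hc⟩ := hQb
  obtain ⟨C, hC⟩ := hQ.bddAbove_of_isCompact hΞ
  refine Integrable.of_mem_Icc c C hmeas ?_
  filter_upwards [hae] with x hx
  exact ⟨hc ⟨x, hx, rfl⟩, hC ⟨x, hx, rfl⟩⟩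

end Integrability

section MomentProblem

variable {X E : Type*} [NormedAddCommGroup E] [NormedSpace ℝ E]
  {Ξ : Set X} {Q : X → ℝ} {c : ℝ} {Ψ : X → E}

/-- The part of the hypograph of `Q` over `Ξ` above height `c`, as pairs
`(point, height)`; the cut-off at `c` makes it compact. -/
def truncatedHypograph (Ξ : Set X) (Q : X → ℝ) (c : ℝ) : Set (X × ℝ) :=
  {q | q.1 ∈ Ξ ∧ q.2 ≤ Q q.1 ∧ c ≤ q.2}

/-- The joint range of moments and truncated objective heights: the convex hull of the pairs
`(Ψ x, t)` with `x ∈ Ξ` and `c ≤ t ≤ Q x`. Maximizing `t` over it replaces maximizing `∫ Q` over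
measures. -/
def momentBody (Ξ : Set X) (Ψ : X → E) (Q : X → ℝ) (c : ℝ) : Set (E × ℝ) :=
  convexHull ℝ (Prod.map Ψ id '' truncatedHypograph Ξ Q c)

lemma exists_fin_of_isGreatest_momentBody [FiniteDimensional ℝ E] {n : ℕ}
    (hn : Module.finrank ℝ E < n) {y : E} {t : ℝ}
    (ht : IsGreatest {t' | (y, t') ∈ momentBody Ξ Ψ Q c} t) :
    ∃ (ξ : Fin n → X) (p : Fin n → ℝ), (∀ j, ξ j ∈ Ξ) ∧ p ∈ stdSimplex ℝ (Fin n) ∧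
      ∑ j, p j • Ψ (ξ j) = y ∧ t ≤ ∑ j, p j * Q (ξ j) := by
  have hfinrank : Module.finrank ℝ (E × ℝ) ≤ n := by
    rwa [Module.finrank_prod, Module.finrank_self]
  have hboundary : (y, t) ∉ interior (momentBody Ξ Ψ Q c) := fun h =>
    let ⟨_, hlt, hmem⟩ := exists_gt_mem_of_mem_interior h
    hlt.not_ge (ht.2 hmem)
  obtain ⟨g, p, hg, hp, hsum⟩ :=
    exists_fin_of_mem_convexHull_of_notMem_interior hfinrank ht.1 hboundary
  choose q hq hqg using hg
  obtain rfl : (fun j => Prod.map Ψ id (q j)) = g := funext hqg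
  have hmoment := congrArg Prod.fst hsum
  have hheight := congrArg Prod.snd hsum
  simp only [Prod.fst_sum, Prod.snd_sum, Prod.smul_fst, Prod.smul_snd, Prod.map_fst, Prod.map_snd,
    id, smul_eq_mul] at hmoment hheight
  refine ⟨fun j => (q j).1, p, fun j => (hq j).1, hp, hmoment, ?_⟩
  rw [← hheight]
  exact Finset.sum_le_sum fun j _ => mul_le_mul_of_nonneg_left (hq j).2.1 (hp.1 j)

variable [TopologicalSpace X]

lemma isCompact_truncatedHypograph [T2Space X] (hΞ : IsCompact Ξ)
    (hQ : UpperSemicontinuousOn Q Ξ) (c : ℝ) : IsCompact (truncatedHypograph Ξ Q c) := by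
  obtain ⟨C, hC⟩ := hQ.bddAbove_of_isCompact hΞ
  have hclosed : IsClosed (truncatedHypograph Ξ Q c) := by
    simpa only [truncatedHypograph, ← and_assoc, Set.ofPred_and] using
      ((upperSemicontinuousOn_iff_isClosed_hypograph hΞ.isClosed).1 hQ).inter
        (isClosed_le continuous_const continuous_snd)
  refine (hΞ.prod (isCompact_Icc (a := c) (b := C))).of_isClosed_subset hclosed ?_
  rintro ⟨x, t⟩ ⟨hx, htQ, hct⟩
  exact ⟨hx, hct, htQ.trans (hC ⟨x, hx, rfl⟩)⟩

lemma isCompact_momentBody [T2Space X] [FiniteDimensional ℝ E] (hΞ : IsCompact Ξ)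
    (hΨ : ContinuousOn Ψ Ξ) (hQ : UpperSemicontinuousOn Q Ξ) (c : ℝ) :
    IsCompact (momentBody Ξ Ψ Q c) :=
  isCompact_convexHull_of_isCompact <| (isCompact_truncatedHypograph hΞ hQ c).image_of_continuousOn
    ((hΨ.prodMap continuousOn_id).mono fun _ hq => ⟨hq.1, Set.mem_univ _⟩)

variable [MeasurableSpace X] {P : Measure X}

/-- The ambiguity set of probability measures concentrated on `Ξ` whose moment vector `∫ Ψ`
lies in `Γ`. -/
def ambiguitySet (Ξ : Set X) (Ψ : X → E) (Γ : Set E) : Set (Measure X) :=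
  {P | IsProbabilityMeasure P ∧ P Ξᶜ = 0 ∧ ∫ x, Ψ x ∂P ∈ Γ}

variable [T2Space X] [OpensMeasurableSpace X]

lemma integral_mem_momentBody [FiniteDimensional ℝ E] [IsProbabilityMeasure P] (hΞ : IsCompact Ξ)
    (hP : P Ξᶜ = 0) (hΨ : ContinuousOn Ψ Ξ) (hQ : UpperSemicontinuousOn Q Ξ)
    (hc : c ∈ lowerBounds (Q '' Ξ)) :
    (∫ x, Ψ x ∂P, ∫ x, Q x ∂P) ∈ momentBody Ξ Ψ Q c := by
  have hΨi := integrable_of_continuousOn_of_compl_null hΞ hP hΨ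
  have hQi := integrable_of_upperSemicontinuousOn_of_compl_null hΞ hP hQ ⟨c, hc⟩
  have hae : ∀ᵐ x ∂P, (Ψ x, Q x) ∈ momentBody Ξ Ψ Q c := by
    filter_upwards [mem_ae_iff.2 hP] with x hx
    exact subset_convexHull ℝ _ ⟨(x, Q x), ⟨hx, le_rfl, hc ⟨x, hx, rfl⟩⟩, rfl⟩
  have := FiniteDimensional.complete ℝ E
  rw [← integral_pair hΨi hQi]
  exact (convex_convexHull ℝ _).integral_mem (isCompact_momentBody hΞ hΨ hQ c).isClosed hae
    (hΨi.prodMk hQi)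

lemma discreteMeasure_mem_ambiguitySet [CompleteSpace E] {ι : Type*} [Fintype ι] {p : ι → ℝ}
    {ξ : ι → X} {Γ : Set E} (hΞ : IsCompact Ξ) (hξ : ∀ j, ξ j ∈ Ξ) (hp : p ∈ stdSimplex ℝ ι)
    (hΓ : ∑ j, p j • Ψ (ξ j) ∈ Γ) : discreteMeasure p ξ ∈ ambiguitySet Ξ Ψ Γ :=
  ⟨isProbabilityMeasure_discreteMeasure hp, discreteMeasure_compl_eq_zero hΞ.measurableSet hξ,
    by rwa [integral_discreteMeasure hp.1]⟩

lemma exists_fin_forall_integral_le [FiniteDimensional ℝ E] {n : ℕ}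
    (hn : Module.finrank ℝ E < n) (hΞ : IsCompact Ξ) (hΨ : ContinuousOn Ψ Ξ)
    (hQ : UpperSemicontinuousOn Q Ξ) (hQb : BddBelow (Q '' Ξ)) {Γ : Set E} (hΓ : IsClosed Γ)
    (hne : (ambiguitySet Ξ Ψ Γ).Nonempty) :
    ∃ (ξ : Fin n → X) (p : Fin n → ℝ), (∀ j, ξ j ∈ Ξ) ∧ p ∈ stdSimplex ℝ (Fin n) ∧
      ∑ j, p j • Ψ (ξ j) ∈ Γ ∧
      ∀ P ∈ ambiguitySet Ξ Ψ Γ, ∫ x, Q x ∂P ≤ ∑ j, p j * Q (ξ j) := by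
  obtain ⟨c, hc⟩ := hQb
  have hcompact : IsCompact (momentBody Ξ Ψ Q c ∩ Prod.fst ⁻¹' Γ) :=
    (isCompact_momentBody hΞ hΨ hQ c).inter_right (hΓ.preimage continuous_fst)
  have hmem : ∀ P ∈ ambiguitySet Ξ Ψ Γ,
      (∫ x, Ψ x ∂P, ∫ x, Q x ∂P) ∈ momentBody Ξ Ψ Q c ∩ Prod.fst ⁻¹' Γ :=
    fun _ ⟨_, hP, hPΓ⟩ => ⟨integral_mem_momentBody hΞ hP hΨ hQ hc, hPΓ⟩
  obtain ⟨P₀, hP₀⟩ := hne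
  obtain ⟨⟨y, t⟩, ⟨hyt, hy⟩, hmax⟩ :=
    hcompact.exists_isMaxOn ⟨_, hmem P₀ hP₀⟩ continuousOn_snd
  obtain ⟨ξ, p, hξ, hp, rfl, hle⟩ := exists_fin_of_isGreatest_momentBody hn
    ⟨hyt, fun t' ht' => hmax (show (y, t') ∈ _ from ⟨ht', hy⟩)⟩
  exact ⟨ξ, p, hξ, hp, hy, fun P hP => (hmax (hmem P hP)).trans hle⟩

lemma mem_ambiguitySet_Iic_iff {ι : Type*} [Fintype ι] (hΞ : IsCompact Ξ) {ψ : ι → X → ℝ}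
    (hψ : ∀ i, ContinuousOn (ψ i) Ξ) {g : ι → ℝ} :
    P ∈ ambiguitySet Ξ (fun x i => ψ i x) (Set.Iic g) ↔
      IsProbabilityMeasure P ∧ P Ξᶜ = 0 ∧ ∀ i, ∫ x, ψ i x ∂P ≤ g i := by
  refine and_congr_right fun _ => and_congr_right fun hP => forall_congr' fun i => ?_
  rw [eval_integral fun i => integrable_of_continuousOn_of_compl_null hΞ hP (hψ i)]

theorem mixed_integer_WCEV_attained_discrete_general [FiniteDimensional ℝ E] {n : ℕ}
    (hn : Module.finrank ℝ E < n) (hΞ : IsCompact Ξ) (hQ : UpperSemicontinuousOn Q Ξ)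
    (hQb : BddBelow (Q '' Ξ)) {Z : Type*} [Finite Z] {Ψ : Z → X → E}
    (hΨ : ∀ z, ContinuousOn (Ψ z) Ξ) {Γ : Z → Set E} (hΓ : ∀ z, IsClosed (Γ z))
    (hne : ∃ P z, P ∈ ambiguitySet Ξ (Ψ z) (Γ z)) :
    ∃ v : ℝ,
      IsGreatest {w | ∃ P z, P ∈ ambiguitySet Ξ (Ψ z) (Γ z) ∧ ∫ x, Q x ∂P = w} v ∧
      IsGreatest {w | ∃ (z : Z) (ξ : Fin n → X) (p : Fin n → ℝ),
        (∀ j, ξ j ∈ Ξ) ∧ p ∈ stdSimplex ℝ (Fin n) ∧ ∑ j, p j • Ψ z (ξ j) ∈ Γ z ∧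
        ∑ j, p j * Q (ξ j) = w} v := by
  have := FiniteDimensional.complete ℝ E
  obtain ⟨P₀, z₀, hP₀⟩ := hne
  have := hP₀.1
  have : Nonempty X := nonempty_of_isProbabilityMeasure P₀
  choose! ξ p hξ hp hpΓ hle using fun z =>
    exists_fin_forall_integral_le hn hΞ (hΨ z) hQ hQb (hΓ z)
  obtain ⟨z, hz, hmax⟩ := Set.exists_max_image {z | (ambiguitySet Ξ (Ψ z) (Γ z)).Nonempty}
    (fun z => ∑ j, p z j * Q (ξ z j)) (Set.toFinite _) ⟨z₀, P₀, hP₀⟩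
  have hbound : ∀ P z', P ∈ ambiguitySet Ξ (Ψ z') (Γ z') →
      ∫ x, Q x ∂P ≤ ∑ j, p z j * Q (ξ z j) :=
    fun P z' hP => (hle z' ⟨P, hP⟩ P hP).trans (hmax z' ⟨P, hP⟩)
  refine ⟨∑ j, p z j * Q (ξ z j), ⟨⟨discreteMeasure (p z) (ξ z), z, ?_, ?_⟩, ?_⟩,
    ⟨⟨z, ξ z, p z, hξ z hz, hp z hz, hpΓ z hz, rfl⟩, ?_⟩⟩
  · exact discreteMeasure_mem_ambiguitySet hΞ (hξ z hz) (hp z hz) (hpΓ z hz)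
  · exact integral_discreteMeasure (hp z hz).1 Q
  · rintro _ ⟨P, z', hP, rfl⟩
    exact hbound P z' hP
  · rintro _ ⟨z', ξ', p', hξ', hp', hpΓ', rfl⟩
    exact (integral_discreteMeasure hp'.1 Q).symm.trans_le
      (hbound _ z' (discreteMeasure_mem_ambiguitySet hΞ hξ' hp' hpΓ'))

end MomentProblem

/-- (Mixed-integer ambiguity sets.) For a finite nonempty discrete
set `Z`, moment functions `ψ_i (·, z)` continuous on the nonempty compact set `Ξ`, and
a nonempty mixed-integer ambiguity set, the worst-case expected value of a bounded
upper semicontinuous `Q` is attained, and equals the maximum of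
`∑_{j=1}^{m+1} p_j Q(ξ_j)` over all `z ∈ Z` and `(m+1)`-point distributions feasible
for the constraints at `z`. -/
theorem mixed_integer_WCEV_attained_discrete
    (d m : ℕ) (Ξ : Set (EuclideanSpace ℝ (Fin d)))
    (hΞne : Ξ.Nonempty) (hΞc : IsCompact Ξ)
    (Q : EuclideanSpace ℝ (Fin d) → ℝ)
    (hQu : UpperSemicontinuousOn Q Ξ) (hQb : ∃ C, ∀ x ∈ Ξ, |Q x| ≤ C)
    (Z : Type*) [Fintype Z] [Nonempty Z]
    (ψ : Fin m → EuclideanSpace ℝ (Fin d) → Z → ℝ)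
    (hψc : ∀ i z, ContinuousOn (fun x => ψ i x z) Ξ)
    (γ : Fin m → Z → ℝ)
    (hamb : ∃ (P : Measure (EuclideanSpace ℝ (Fin d))) (z : Z),
      IsProbabilityMeasure P ∧ P Ξᶜ = 0 ∧ ∀ i, ∫ x, ψ i x z ∂P ≤ γ i z) :
    ∃ v : ℝ,
      IsGreatest {w : ℝ | ∃ (P : Measure (EuclideanSpace ℝ (Fin d))) (z : Z),
          (IsProbabilityMeasure P ∧ P Ξᶜ = 0 ∧ ∀ i, ∫ x, ψ i x z ∂P ≤ γ i z) ∧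
          (∫ x, Q x ∂P) = w} v ∧
      IsGreatest {w : ℝ | ∃ (z : Z) (ξ : Fin (m + 1) → EuclideanSpace ℝ (Fin d))
            (p : Fin (m + 1) → ℝ),
          (∀ j, ξ j ∈ Ξ) ∧ (∀ j, 0 ≤ p j) ∧ (∑ j, p j = 1) ∧
          (∀ i, ∑ j, p j * ψ i (ξ j) z ≤ γ i z) ∧
          (∑ j, p j * Q (ξ j)) = w} v := by
  have hQbelow : BddBelow (Q '' Ξ) :=
    let ⟨C, hC⟩ := hQb
    ⟨-C, Set.forall_mem_image.2 fun x hx => neg_le_of_abs_le (hC x hx)⟩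
  have hiff := fun P z => mem_ambiguitySet_Iic_iff (P := P) (g := (γ · z)) hΞc (hψc · z)
  simpa [hiff, stdSimplex, Pi.le_def, and_assoc] using
    mixed_integer_WCEV_attained_discrete_general (n := m + 1) (by simp) hΞc hQu hQbelow
      (fun z => continuousOn_pi.2 (hψc · z)) (fun z => isClosed_Iic (a := (γ · z)))
      (hamb.imp fun P => Exists.imp fun z => (hiff P z).2)
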